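/- arXiv:1607.08496 — 2 statements merged into one kernel-verified Lean document; each statement's English description precedes it below -/
import Mathlib

section
/- For every connected finite simple graph G on n ≥ 3 vertices, the node reliability polynomial NRel(G;p) has a nonreal complex root; that is, there exists p ∈ ℂ with p ∉ ℝ such that Σ_{k=1}^n c_k p^k (1−p)^{n−k} = 0. -/
open scoped Classical

/-- The number of connected sets (nonempty vertex subsets inducing a connected
subgraph) of order `k` in the finite simple graph `G`. -/
noncomputable def connCount {V : Type*} [Fintype V] (G : SimpleGraph V) (k : ℕ) : ℕ :=
  (Finset.univ.filter fun S : Finset V =>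
    S.card = k ∧ (G.induce (S : Set V)).Connected).card

/-- The node reliability polynomial `NRel(G;p) = ∑_{k=1}^n c_k p^k (1-p)^(n-k)`,
at a complex argument. -/
noncomputable def nodeRel {V : Type*} [Fintype V] (G : SimpleGraph V) (p : ℂ) : ℂ :=
  ∑ k ∈ Finset.Icc 1 (Fintype.card V),
    (connCount G k : ℂ) * p ^ k * (1 - p) ^ (Fintype.card V - k)

/-! With `H = ∑ c_{k+1} x^k`, one has `NRel(G; x/(1+x)) = x (1+x)^{-n} H(x)`, and `x ↦ x/(1+x)`
maps nonreal numbers to nonreal numbers, so it suffices that `H` is not real-rooted. If it were,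
its roots would be `-t₁, …, -t_{n-1}` with `tᵢ > 0`, since its coefficients are nonnegative and
`c₁ ≠ 0`. Cauchy–Schwarz gives `(n-1)² ≤ (∑ tᵢ)(∑ tᵢ⁻¹) = (c_{n-1}/c_n)(c₂/c₁)`, which is at most
`n(n-1)/2` because `c_n = 1`, `c₁ = n`, `c_{n-1} ≤ n` and `c₂ ≤ n(n-1)/2`; hence `n ≤ 2`. -/

open Polynomial

lemma card_sq_le_sum_mul_sum_inv {K : Type*} [Semifield K] [LinearOrder K]
    [IsStrictOrderedRing K] [ExistsAddOfLE K] {s : Multiset K} (hs : ∀ a ∈ s, 0 < a) :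
    (s.card : K) ^ 2 ≤ s.sum * (s.map (·⁻¹)).sum := by
  have hpos (a : s) : 0 < a.1 := hs a.1 Multiset.coe_mem
  have hcauchy : (∑ _a : s, (1 : K)) ^ 2 ≤ (∑ a : s, a.1) * ∑ a : s, a.1⁻¹ :=
    Finset.sum_sq_le_sum_mul_sum_of_sq_le_mul _ (fun a _ => (hpos a).le)
      (fun a _ => (inv_pos.2 (hpos a)).le) (fun a _ => by simp [(hpos a).ne'])
  simpa [Finset.sum] using hcauchy

lemma neg_of_isRoot_of_coeff_nonneg {R : Type*} [Semiring R] [LinearOrder R] [IsOrderedRing R]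
    {P : R[X]} (hP : ∀ k, 0 ≤ P.coeff k) (h0 : P.coeff 0 ≠ 0) {x : R}
    (hx : P.IsRoot x) : x < 0 := by
  by_contra! hx_nonneg
  have hsum : ∑ k ∈ Finset.range (P.natDegree + 1), P.coeff k * x ^ k = 0 := by
    rw [← P.eval_eq_sum_range]; exact hx
  rw [Finset.sum_eq_zero_iff_of_nonneg fun k _ => mul_nonneg (hP k) (pow_nonneg hx_nonneg k)]
    at hsum
  exact h0 (by simpa using hsum 0 (by simp))

theorem natDegree_sq_mul_le_coeff_one_mul_nextCoeff {K : Type*} [Field K] [LinearOrder K]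
    [IsStrictOrderedRing K] {P : K[X]} (hP : ∀ k, 0 ≤ P.coeff k) (hsplits : P.Splits) :
    (P.natDegree : K) ^ 2 * (P.coeff 0 * P.leadingCoeff) ≤ P.coeff 1 * P.nextCoeff := by
  have hnext : 0 ≤ P.nextCoeff := by
    unfold nextCoeff
    split_ifs
    exacts [le_rfl, hP _]
  by_cases h0 : P.coeff 0 = 0
  · simpa [h0] using mul_nonneg (hP 1) hnext
  set t := P.roots.map (- ·) with ht
  have ht_pos : ∀ a ∈ t, 0 < a := by
    simp only [ht, Multiset.mem_map, forall_exists_index, and_imp, forall_apply_eq_imp_iff₂,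
      neg_pos]
    exact fun r hr => neg_of_isRoot_of_coeff_nonneg hP h0 (isRoot_of_mem_roots hr)
  have hcard : P.natDegree = t.card := by
    rw [ht, Multiset.card_map, hsplits.natDegree_eq_card_roots]
  have hsum : P.nextCoeff = P.leadingCoeff * t.sum := by
    rw [hsplits.nextCoeff_eq_neg_sum_roots_mul_leadingCoeff, ht, Multiset.sum_map_neg', neg_mul,
      mul_neg]
  have hsum_inv : P.coeff 1 = P.coeff 0 * (t.map (·⁻¹)).sum := by
    have h := hsplits.eval_derivative_eq_eval_mul_sum (x := 0) (by rwa [← coeff_zero_eq_eval_zero])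
    simpa [ht, ← coeff_zero_eq_eval_zero, coeff_derivative] using h
  calc (P.natDegree : K) ^ 2 * (P.coeff 0 * P.leadingCoeff)
      ≤ (t.sum * (t.map (·⁻¹)).sum) * (P.coeff 0 * P.leadingCoeff) := by
        rw [hcard]
        gcongr
        exacts [mul_nonneg (hP 0) (hP _), card_sq_le_sum_mul_sum_inv ht_pos]
    _ = P.coeff 1 * P.nextCoeff := by rw [hsum, hsum_inv]; ring

lemma splits_of_forall_aeval_eq_zero_im_eq_zero {P : ℝ[X]}
    (hP : ∀ z : ℂ, aeval z P = 0 → z.im = 0) : P.Splits := by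
  refine Splits.of_splits_map Complex.ofRealHom (IsAlgClosed.splits _) fun z hz => ?_
  have hz_im : z.im = 0 := hP z (by
    rw [aeval_def, ← eval_map]
    exact isRoot_of_mem_roots hz)
  exact ⟨z.re, Complex.ext rfl hz_im.symm⟩

lemma im_div_one_add (z : ℂ) : (z / (1 + z)).im = z.im / Complex.normSq (1 + z) := by
  by_cases hz : 1 + z = 0
  · simp [hz]
  rw [show z / (1 + z) = 1 - (1 + z)⁻¹ by field_simp; ring]
  simp [Complex.inv_im, neg_div]

section ConnectedSets

variable {V : Type*} [Fintype V] (G : SimpleGraph V)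

lemma connCount_le_choose (k : ℕ) : connCount G k ≤ (Fintype.card V).choose k := by
  rw [← Finset.card_univ, ← Finset.card_powersetCard]
  refine Finset.card_le_card fun S hS => ?_
  simpa [Finset.mem_powersetCard] using (Finset.mem_filter.1 hS).2.1

lemma connCount_one : connCount G 1 = Fintype.card V := by
  have hconn (v : V) : (G.induce (({v} : Finset V) : Set V)).Connected := by
    rw [Finset.coe_singleton]
    exact .of_subsingleton
  rw [connCount, ← Nat.choose_one_right (Fintype.card V), ← Finset.card_univ,
    ← Finset.card_powersetCard]
  congr 1
  ext S
  simp only [Finset.mem_filter, Finset.mem_univ, true_and, Finset.mem_powersetCard,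
    Finset.subset_univ, and_iff_left_iff_imp]
  intro hS
  obtain ⟨v, rfl⟩ := Finset.card_eq_one.1 hS
  exact hconn v

variable {G} in
lemma connCount_card (hG : G.Connected) : connCount G (Fintype.card V) = 1 := by
  refine le_antisymm (by simpa using connCount_le_choose G (Fintype.card V)) ?_
  refine Finset.card_pos.2 ⟨Finset.univ, Finset.mem_filter.2 ⟨Finset.mem_univ _, rfl, ?_⟩⟩
  rw [Finset.coe_univ]
  exact (SimpleGraph.induceUnivIso G).connected_iff.2 hG

/-- The generating polynomial `∑_{k=0}^{n-1} c_{k+1} X^k` of the connected sets of `G`. Degrees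
are shifted down by one, which removes the root `0` and makes the constant term `c_1` nonzero. -/
noncomputable def connSetPoly : ℝ[X] :=
  ∑ k ∈ Finset.range (Fintype.card V), C (connCount G (k + 1) : ℝ) * X ^ k

lemma coeff_connSetPoly (k : ℕ) : (connSetPoly G).coeff k = connCount G (k + 1) := by
  simp only [connSetPoly, finsetSum_coeff, coeff_C_mul, coeff_X_pow, mul_ite, mul_one, mul_zero,
    Finset.sum_ite_eq, Finset.mem_range, ite_eq_left_iff, not_lt]
  intro hk
  have hzero := connCount_le_choose G (k + 1)
  rw [Nat.choose_eq_zero_of_lt (by omega), Nat.le_zero] at hzero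
  simp [hzero]

lemma nodeRel_div_one_add {x : ℂ} (hx : 1 + x ≠ 0) :
    nodeRel G (x / (1 + x)) = x / (1 + x) ^ Fintype.card V * aeval x (connSetPoly G) := by
  have hcompl : 1 - x / (1 + x) = 1 / (1 + x) := by field_simp; ring
  simp only [nodeRel, connSetPoly, map_sum, Finset.mul_sum, map_mul, map_pow, aeval_C, aeval_X,
    Complex.coe_algebraMap, Complex.ofReal_natCast, hcompl]
  rw [← Finset.Ico_add_one_right_eq_Icc, Finset.sum_Ico_eq_sum_range, Nat.add_sub_cancel]
  refine Finset.sum_congr rfl fun k hk => ?_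
  obtain ⟨j, hj⟩ := Nat.exists_eq_add_of_lt (Finset.mem_range.1 hk)
  rw [show Fintype.card V - (1 + k) = j by omega, hj, add_comm 1 k, div_pow, div_pow, one_pow]
  field_simp
  ring

variable {G}

lemma natDegree_connSetPoly (hG : G.Connected) :
    (connSetPoly G).natDegree = Fintype.card V - 1 := by
  have := hG.nonempty
  have hpos : 0 < Fintype.card V := Fintype.card_pos
  refine natDegree_eq_of_le_of_coeff_ne_zero ?_ ?_
  · refine natDegree_sum_le_of_forall_le _ _ fun k hk => (natDegree_C_mul_X_pow_le _ _).trans ?_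
    exact Nat.le_sub_one_of_lt (Finset.mem_range.1 hk)
  · rw [coeff_connSetPoly, Nat.sub_add_cancel hpos, connCount_card hG]
    simp

theorem not_splits_connSetPoly (hG : G.Connected) (hn : 3 ≤ Fintype.card V) :
    ¬ (connSetPoly G).Splits := by
  intro hsplits
  obtain ⟨m, hm⟩ : ∃ m, Fintype.card V = m + 2 := ⟨Fintype.card V - 2, by omega⟩
  have hdeg : (connSetPoly G).natDegree = m + 1 := by rw [natDegree_connSetPoly hG]; omega
  have hlast : connCount G (m + 2) = 1 := hm ▸ connCount_card hG
  have hnewton := natDegree_sq_mul_le_coeff_one_mul_nextCoeff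
    (fun k => by rw [coeff_connSetPoly]; positivity) hsplits
  rw [nextCoeff_of_natDegree_pos (by omega), leadingCoeff, hdeg] at hnewton
  simp only [coeff_connSetPoly, Nat.add_sub_cancel, zero_add, Nat.reduceAdd, connCount_one,
    hlast, hm, Nat.cast_one, mul_one] at hnewton
  have hineq : (m + 1) ^ 2 * (m + 2) ≤ connCount G 2 * connCount G (m + 1) := by
    exact_mod_cast hnewton
  have hpair : 2 * connCount G 2 ≤ (m + 2) * (m + 1) := by
    have h := connCount_le_choose G 2
    rw [hm, Nat.choose_two_right, Nat.le_div_iff_mul_le two_pos] at h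
    rwa [mul_comm]
  have hcopoint : connCount G (m + 1) ≤ m + 2 := by
    simpa [hm, Nat.choose_succ_self_right] using connCount_le_choose G (m + 1)
  have hbound : 2 * (m + 1) * ((m + 1) * (m + 2)) ≤ (m + 2) * ((m + 1) * (m + 2)) :=
    calc 2 * (m + 1) * ((m + 1) * (m + 2))
        = 2 * ((m + 1) ^ 2 * (m + 2)) := by ring
      _ ≤ 2 * connCount G 2 * connCount G (m + 1) := by rw [mul_assoc 2]; gcongr
      _ ≤ (m + 2) * (m + 1) * (m + 2) := by gcongr
      _ = (m + 2) * ((m + 1) * (m + 2)) := mul_assoc _ _ _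
  have hsmall : 2 * (m + 1) ≤ m + 2 := Nat.le_of_mul_le_mul_right hbound (by positivity)
  omega

end ConnectedSets

/-- For every connected finite simple graph on at least 3 vertices, the node reliability
polynomial has a nonreal complex root. -/
theorem nodeRel_has_nonreal_root {V : Type*} [Fintype V] (G : SimpleGraph V)
    (hG : G.Connected) (hn : 3 ≤ Fintype.card V) :
    ∃ p : ℂ, p.im ≠ 0 ∧ nodeRel G p = 0 := by
  by_contra! hreal
  refine not_splits_connSetPoly hG hn (splits_of_forall_aeval_eq_zero_im_eq_zero fun x hx => ?_)
  by_contra hx_im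
  have hx1 : 1 + x ≠ 0 := fun h => hx_im (by simpa using congrArg Complex.im h)
  refine hreal (x / (1 + x)) ?_ (by rw [nodeRel_div_one_add G hx1, hx, mul_zero])
  rw [im_div_one_add]
  exact div_ne_zero hx_im (Complex.normSq_pos.2 hx1).ne'
end

section
/- For every integer n ≥ 2, the node reliability polynomial of the cycle graph C_{2n+1} evaluated at the real number p = 2n² − 1 is strictly negative: NRel(C_{2n+1}; 2n² − 1) < 0. -/
open scoped Classical

/-- The node reliability polynomial of `G` at a real argument `p`: the sum over all
connected sets `S` of `p^|S| * (1-p)^(N-|S|)`. -/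
noncomputable def nodeRelR {V : Type*} [Fintype V] (G : SimpleGraph V) (p : ℝ) : ℝ :=
  ∑ S ∈ Finset.univ.filter fun S : Finset V => (G.induce (S : Set V)).Connected,
    p ^ S.card * (1 - p) ^ (Fintype.card V - S.card)

/-!
The connected sets of a cycle on `m + 1` vertices are its arcs, so that
`NRel(p) = p ^ (m + 1) + (m + 1) * ∑ k < m, p ^ (k + 1) * (1 - p) ^ (m - k)`, and the sum is
geometric. For even `m` and `p = t + 1` this gives
`(2 * t + 1) * NRel(p) = (t + 1) * ((m + 1) * t ^ (m + 1) - ((m - 1) * t - 1) * (t + 1) ^ m)`.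
The right side is negative once `(1 + 1 / t) ^ m`, bounded below by the first three terms of its
binomial expansion, exceeds `(m + 1) * t / ((m - 1) * t - 1)`. For `m = 2 * n` these terms
suffice at `t = 2 * n ^ 2 - 2`.
-/

open Finset SimpleGraph

section Arc

variable {A : Type*} [AddCommGroup A] [DecidableEq A] {g a b x y : A} {k l : ℕ}

/-- The arc `{a, a + g, …, a + k • g}` of the cycle traced out by `g`. It is indexed by the number
`k` of its steps rather than by its number of vertices, so that no arc is empty. -/
def arc (g a : A) (k : ℕ) : Finset A :=
  (range (k + 1)).image fun i => a + i • g

theorem mem_arc : x ∈ arc g a k ↔ ∃ i ≤ k, a + i • g = x := by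
  simp [arc]

theorem self_mem_arc : a ∈ arc g a k :=
  mem_arc.2 ⟨0, k.zero_le, by simp⟩

theorem arc_zero (g a : A) : arc g a 0 = {a} := by
  simp [arc]

theorem arc_succ (g a : A) (k : ℕ) : arc g a (k + 1) = insert (a + (k + 1) • g) (arc g a k) := by
  rw [arc, range_add_one, image_insert, arc]

theorem arc_sub_succ (g a : A) (k : ℕ) : arc g (a - g) (k + 1) = insert (a - g) (arc g a k) := by
  rw [arc, range_add_one', image_insert, map_eq_image, image_image, arc]
  congr 1
  · simp
  · refine image_congr fun i _ => ?_
    change a - g + (i + 1) • g = a + i • g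
    rw [succ_nsmul]
    abel

theorem card_arc (hk : k < addOrderOf g) : #(arc g a k) = k + 1 := by
  rw [arc, card_image_of_injOn, card_range]
  intro i hi j hj hij
  rw [coe_range, Set.mem_Iio] at hi hj
  exact nsmul_injOn_Iio_addOrderOf (Set.mem_Iio.2 (by lia)) (Set.mem_Iio.2 (by lia))
    (add_left_cancel hij)

theorem sub_notMem_arc (hk : k + 1 < addOrderOf g) : a - g ∉ arc g a k := by
  intro h
  have hcard := card_arc (a := a - g) hk
  rw [arc_sub_succ, insert_eq_of_mem h, card_arc (by lia)] at hcard
  lia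

theorem arc_inj (hk : k + 1 < addOrderOf g) (hl : l + 1 < addOrderOf g) :
    arc g a k = arc g b l ↔ a = b ∧ k = l := by
  refine ⟨fun h => ?_, fun ⟨hab, hkl⟩ => hab ▸ hkl ▸ rfl⟩
  have hkl : k = l := by
    have hcard := congrArg card h
    rw [card_arc (by lia), card_arc (by lia)] at hcard
    lia
  refine ⟨?_, hkl⟩
  obtain ⟨i, hi, rfl⟩ := mem_arc.1 (h ▸ self_mem_arc : a ∈ arc g b l)
  cases i with
  | zero => simp
  | succ i =>
    refine absurd ?_ (sub_notMem_arc (a := b + (i + 1) • g) hk)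
    rw [h, mem_arc]
    exact ⟨i, by lia, by rw [succ_nsmul]; abel⟩

theorem arc_eq_univ [Fintype A] (hg : addOrderOf g = Fintype.card A) (hk : addOrderOf g ≤ k + 1) :
    arc g a k = univ := by
  have hpos : 0 < addOrderOf g := hg ▸ Fintype.card_pos_iff.2 ⟨a⟩
  have hround : arc g a (addOrderOf g - 1) = univ := by
    rw [← card_eq_iff_eq_univ, card_arc (by lia), ← hg]
    lia
  rw [← univ_subset_iff, ← hround]
  exact image_subset_image (range_mono (by lia))

theorem connected_induce_arc (g a : A) (k : ℕ) :
    ((circulantGraph {g}).induce (arc g a k : Set A)).Connected := by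
  induction k with
  | zero =>
    rw [arc_zero, coe_singleton, induce_singleton_eq_top]
    exact connected_top
  | succ k ih =>
    have hlast : a + k • g ∈ arc g a k := mem_arc.2 ⟨k, le_rfl, rfl⟩
    rw [arc_succ]
    by_cases hnew : a + (k + 1) • g ∈ arc g a k
    · rwa [insert_eq_of_mem hnew]
    · have hadj : (circulantGraph {g}).Adj (a + (k + 1) • g) (a + k • g) :=
        ⟨fun h => hnew (h ▸ hlast), .inl (by simp [succ_nsmul])⟩
      rw [coe_insert, Set.insert_eq]
      refine connected_induce_union ?_ ih.preconnected rfl hlast hadj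
      exact .of_subsingleton

theorem exists_arc_eq_insert_of_adj (hx : x ∈ arc g a k) (hy : y ∉ arc g a k)
    (hxy : (circulantGraph {g}).Adj x y) : ∃ b, arc g b (k + 1) = insert y (arc g a k) := by
  have endpoint_eq {z : A} (h : y ∈ insert z (arc g a k)) : z = y :=
    ((mem_insert.1 h).resolve_right hy).symm
  obtain ⟨i, hi, rfl⟩ := mem_arc.1 hx
  obtain ⟨-, h | h⟩ := hxy
  · have hmem : y ∈ arc g (a - g) (k + 1) :=
      mem_arc.2 ⟨i, by lia, by rw [eq_sub_of_add_eq (sub_eq_iff_eq_add'.1 h).symm]; abel⟩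
    rw [arc_sub_succ] at hmem
    exact ⟨a - g, by rw [arc_sub_succ, endpoint_eq hmem]⟩
  · have hmem : y ∈ arc g a (k + 1) :=
      mem_arc.2 ⟨i + 1, by lia, by rw [sub_eq_iff_eq_add'.1 h, succ_nsmul, add_assoc]⟩
    rw [arc_succ] at hmem
    exact ⟨a, by rw [arc_succ, endpoint_eq hmem]⟩

theorem exists_eq_arc_of_connected_induce {S : Finset A}
    (hS : ((circulantGraph {g}).induce (S : Set A)).Connected) : ∃ a k, S = arc g a k := by
  obtain ⟨s, hs⟩ := hS.nonempty
  obtain ⟨T, hT⟩ := {T ∈ S.powerset | ∃ a k, T = arc g a k}.exists_maximal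
    ⟨{s}, by simpa using ⟨hs, s, 0, (arc_zero g s).symm⟩⟩
  simp only [mem_filter, mem_powerset] at hT
  obtain ⟨hTS, a, k, rfl⟩ := hT.prop
  refine ⟨a, k, Subset.antisymm (fun y hy => ?_) hTS⟩
  by_contra hyT
  obtain ⟨w⟩ := hS.preconnected ⟨a, hTS self_mem_arc⟩ ⟨y, hy⟩
  obtain ⟨⟨⟨u, v⟩, huv⟩, -, hu, hv⟩ :=
    w.exists_boundary_dart {z | (z : A) ∈ arc g a k} self_mem_arc hyT
  obtain ⟨b, hb⟩ := exists_arc_eq_insert_of_adj hu hv huv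
  have hbS : arc g b (k + 1) ⊆ S := hb ▸ insert_subset v.2 hTS
  have hle : arc g b (k + 1) ⊆ arc g a k :=
    hT.le_of_ge ⟨hbS, b, k + 1, rfl⟩ (hb ▸ subset_insert _ _)
  exact hv (hle (hb ▸ mem_insert_self _ _))

theorem connected_induce_iff_exists_eq_arc {S : Finset A} :
    ((circulantGraph {g}).induce (S : Set A)).Connected ↔ ∃ a k, S = arc g a k :=
  ⟨exists_eq_arc_of_connected_induce, fun ⟨a, k, h⟩ => h ▸ connected_induce_arc g a k⟩

theorem connected_induce_iff_eq_univ_or_eq_arc [Fintype A]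
    (hg : addOrderOf g = Fintype.card A) {S : Finset A} :
    ((circulantGraph {g}).induce (S : Set A)).Connected ↔
      S = univ ∨ ∃ a k, k + 1 < addOrderOf g ∧ S = arc g a k := by
  rw [connected_induce_iff_exists_eq_arc]
  constructor
  · rintro ⟨a, k, rfl⟩
    obtain hk | hk := lt_or_ge (k + 1) (addOrderOf g)
    · exact .inr ⟨a, k, hk, rfl⟩
    · exact .inl (arc_eq_univ hg hk)
  · rintro (rfl | ⟨a, k, -, rfl⟩)
    · exact ⟨0, addOrderOf g, (arc_eq_univ hg (by lia)).symm⟩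
    · exact ⟨a, k, rfl⟩

theorem arc_ne_univ [Fintype A] (hg : addOrderOf g = Fintype.card A) (hk : k + 1 < addOrderOf g) :
    arc g a k ≠ univ := by
  rw [Ne, ← card_eq_iff_eq_univ, card_arc (by lia), ← hg]
  exact hk.ne

theorem sum_connected_induce {M : Type*} [AddCommMonoid M] [Fintype A]
    (hg : addOrderOf g = Fintype.card A) {𝒮 : Finset (Finset A)}
    (h𝒮 : ∀ S, S ∈ 𝒮 ↔ ((circulantGraph {g}).induce (S : Set A)).Connected) (f : Finset A → M) :
    ∑ S ∈ 𝒮, f S = f univ + ∑ a, ∑ k ∈ range (addOrderOf g - 1), f (arc g a k) := by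
  set arcs := (univ ×ˢ range (addOrderOf g - 1)).image fun c : A × ℕ => arc g c.1 c.2
    with arcs_def
  have mem_arcs {S : Finset A} : S ∈ arcs ↔ ∃ a k, k + 1 < addOrderOf g ∧ S = arc g a k := by
    simp [arcs_def, Nat.lt_sub_iff_add_lt, eq_comm]
  have h𝒮_eq : 𝒮 = insert univ arcs := by
    ext S
    rw [h𝒮, mem_insert, mem_arcs, connected_induce_iff_eq_univ_or_eq_arc hg]
  have huniv : univ ∉ arcs := fun h =>
    have ⟨_, _, hk, h⟩ := mem_arcs.1 h
    arc_ne_univ hg hk h.symm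
  rw [h𝒮_eq, sum_insert huniv, sum_image, sum_product]
  rintro ⟨a, k⟩ hk ⟨b, l⟩ hl h
  simp only [coe_product, coe_univ, coe_range, Set.mem_prod, Set.mem_univ, true_and,
    Set.mem_Iio] at hk hl
  exact Prod.ext_iff.2 ((arc_inj (by lia) (by lia)).1 h)

end Arc

theorem nodeRelR_circulantGraph_singleton {A : Type*} [AddCommGroup A] [Fintype A] {g : A} {m : ℕ}
    (hg : addOrderOf g = m + 1) (hA : Fintype.card A = m + 1) (p : ℝ) :
    nodeRelR (circulantGraph {g}) p =
      p ^ (m + 1) + (m + 1) * ∑ k ∈ range m, p ^ (k + 1) * (1 - p) ^ (m - k) := by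
  have harc (a : A) (k : ℕ) (hk : k ∈ range m) :
      p ^ #(arc g a k) * (1 - p) ^ (m + 1 - #(arc g a k)) = p ^ (k + 1) * (1 - p) ^ (m - k) := by
    rw [mem_range] at hk
    rw [card_arc (by lia), Nat.add_sub_add_right]
  rw [nodeRelR, sum_connected_induce (hg.trans hA.symm) (by simp), card_univ, hA, hg,
    Nat.add_sub_cancel, Nat.sub_self, pow_zero, mul_one,
    sum_congr rfl fun a _ => sum_congr rfl (harc a), sum_const, card_univ, hA, nsmul_eq_mul,
    Nat.cast_add_one]

open Fin.CommRing in
theorem addOrderOf_fin_one (m : ℕ) : addOrderOf (1 : Fin (m + 1)) = m + 1 :=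
  CharP.eq (Fin (m + 1)) (CharP.addOrderOf_one _) (Fin.charP _)

theorem nodeRelR_cycleGraph (m : ℕ) (p : ℝ) :
    nodeRelR (cycleGraph (m + 1)) p =
      p ^ (m + 1) + (m + 1) * ∑ k ∈ range m, p ^ (k + 1) * (1 - p) ^ (m - k) := by
  rw [cycleGraph_eq_circulantGraph]
  exact nodeRelR_circulantGraph_singleton (addOrderOf_fin_one m) (Fintype.card_fin _) p

theorem two_mul_sub_one_mul_nodeRelR_cycleGraph (m : ℕ) (p : ℝ) :
    (2 * p - 1) * nodeRelR (cycleGraph (m + 1)) p =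
      p * ((2 * p - 1) * p ^ m + (m + 1) * (1 - p) * (p ^ m - (1 - p) ^ m)) := by
  have hsum : ∑ k ∈ range m, p ^ (k + 1) * (1 - p) ^ (m - k) =
      p * (1 - p) * ∑ k ∈ range m, p ^ k * (1 - p) ^ (m - 1 - k) := by
    rw [mul_sum]
    refine sum_congr rfl fun k hk => ?_
    rw [mem_range] at hk
    rw [show m - k = m - 1 - k + 1 by lia]
    ring
  rw [nodeRelR_cycleGraph, hsum]
  linear_combination (m + 1) * p * (1 - p) * (Commute.all p (1 - p)).mul_geom_sum₂ m

theorem nodeRelR_cycleGraph_neg_iff {m : ℕ} (hm : Even m) {t : ℝ} (ht : 0 ≤ t) :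
    nodeRelR (cycleGraph (m + 1)) (t + 1) < 0 ↔
      (m + 1) * t ^ (m + 1) < ((m - 1) * t - 1) * (t + 1) ^ m := by
  have hid : (2 * t + 1) * nodeRelR (cycleGraph (m + 1)) (t + 1) =
      (t + 1) * ((m + 1) * t ^ (m + 1) - ((m - 1) * t - 1) * (t + 1) ^ m) := by
    have h := two_mul_sub_one_mul_nodeRelR_cycleGraph m (t + 1)
    rw [show 1 - (t + 1) = -t by ring, hm.neg_pow] at h
    linear_combination h
  rw [← smul_neg_iff_of_pos_left (show 0 < 2 * t + 1 by positivity), smul_eq_mul, hid,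
    ← smul_eq_mul, smul_neg_iff_of_pos_left (by positivity), sub_neg]

theorem one_add_mul_add_choose_two_mul_sq_le_pow {R : Type*} [CommSemiring R] [PartialOrder R]
    [IsOrderedRing R] {x : R} (hx : 0 ≤ x) (n : ℕ) :
    1 + n * x + n.choose 2 * x ^ 2 ≤ (1 + x) ^ n := by
  induction n with
  | zero => simp
  | succ n ih =>
    have hchoose : ((n + 1).choose 2 : R) = n + n.choose 2 := by
      rw [Nat.choose_succ_succ' n 1, Nat.choose_one_right, Nat.cast_add]
    calc 1 + (n + 1 : ℕ) * x + (n + 1).choose 2 * x ^ 2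
      _ ≤ 1 + (n + 1 : ℕ) * x + (n + 1).choose 2 * x ^ 2 + n.choose 2 * x ^ 3 :=
        le_add_of_nonneg_right (by positivity)
      _ = (1 + n * x + n.choose 2 * x ^ 2) * (1 + x) := by rw [hchoose]; push_cast; ring
      _ ≤ (1 + x) ^ n * (1 + x) := mul_le_mul_of_nonneg_right ih (add_nonneg zero_le_one hx)
      _ = (1 + x) ^ (n + 1) := (pow_succ _ _).symm

theorem mul_pow_succ_lt_of_mul_pow_three_lt {m : ℕ} {t : ℝ} (ht : 0 < t)
    (h : (m + 1) * t ^ 3 < ((m - 1) * t - 1) * (t ^ 2 + m * t + m.choose 2)) :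
    (m + 1) * t ^ (m + 1) < ((m - 1) * t - 1) * (t + 1) ^ m := by
  have hbinomial : t ^ m * (t ^ 2 + m * t + m.choose 2) ≤ t ^ 2 * (t + 1) ^ m := by
    calc t ^ m * (t ^ 2 + m * t + m.choose 2)
      _ = t ^ 2 * (t ^ m * (1 + m * t⁻¹ + m.choose 2 * t⁻¹ ^ 2)) := by field_simp
      _ ≤ t ^ 2 * (t ^ m * (1 + t⁻¹) ^ m) := by
        gcongr
        exact one_add_mul_add_choose_two_mul_sq_le_pow (by positivity) m
      _ = t ^ 2 * (t + 1) ^ m := by rw [← mul_pow, mul_one_add, mul_inv_cancel₀ ht.ne']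
  have hcoeff : 0 < (m - 1) * t - 1 :=
    pos_of_mul_pos_left (h.trans' (by positivity)) (by positivity)
  refine lt_of_mul_lt_mul_left ?_ (sq_nonneg t)
  calc t ^ 2 * ((m + 1) * t ^ (m + 1))
    _ = t ^ m * ((m + 1) * t ^ 3) := by ring
    _ < t ^ m * (((m - 1) * t - 1) * (t ^ 2 + m * t + m.choose 2)) := by gcongr
    _ = ((m - 1) * t - 1) * (t ^ m * (t ^ 2 + m * t + m.choose 2)) := by ring
    _ ≤ ((m - 1) * t - 1) * (t ^ 2 * (t + 1) ^ m) := by gcongr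
    _ = t ^ 2 * (((m - 1) * t - 1) * (t + 1) ^ m) := by ring

/-- For every n ≥ 2, the node reliability polynomial of the odd cycle C_{2n+1}
is strictly negative at p = 2n² - 1. -/
theorem cycle_nodeRel_neg_at :
    ∀ n : ℕ, 2 ≤ n →
      nodeRelR (SimpleGraph.cycleGraph (2 * n + 1)) (2 * (n : ℝ) ^ 2 - 1) < 0 := by
  intro n hn
  -- As polynomials in `n - 2`, the quantities shown positive below have nonnegative coefficients.
  obtain ⟨x, hx, hnx⟩ : ∃ x : ℝ, 0 ≤ x ∧ (n : ℝ) = x + 2 :=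
    ⟨n - 2, sub_nonneg.2 (mod_cast hn), by ring⟩
  have ht : (0 : ℝ) < 2 * n ^ 2 - 2 := by rw [hnx]; ring_nf; positivity
  rw [show 2 * (n : ℝ) ^ 2 - 1 = 2 * n ^ 2 - 2 + 1 by ring,
    nodeRelR_cycleGraph_neg_iff (even_two_mul n) ht.le]
  refine mul_pow_succ_lt_of_mul_pow_three_lt ht ?_
  rw [Nat.cast_choose_two, ← sub_pos]
  push_cast
  rw [hnx]
  ring_nf
  positivity
end
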